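/- Let f ∈ A₁(c), set t = f′(c₁) and s = f′(c₂), and assume s > t > 0. Let Z = 2t·(1 − √(t/s))/(c₂−c₁), which is the unique solution of 4t³/((2t − Z(c₂−c₁))²) = s with Z(c₂−c₁) < 2t, and note Z > 0. Then for every x ∈ (−1, c₁): f(x) ≤ c₃ + (4t³/Z)·( 1/(2t + Z(c₁−x)) − 1/(2t) ). -/

import Mathlib

open Set Complex

noncomputable section

/-- The doubly-slit plane `ℂ(J)` for `J ⊆ ℝ`. -/
def CSlit (J : Set ℝ) : Set ℂ := {z : ℂ | z.im ≠ 0 ∨ z.re ∈ J}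

/-- `ℂ₁ = ℂ((−1,1))`. -/
def C1 : Set ℂ := CSlit (Set.Ioo (-1 : ℝ) 1)

/-- The class `A₁(c)` of normalized Herglotz functions. -/
structure MemA1 (c₁ c₂ c₃ c₄ : ℝ) (f : ℂ → ℂ) : Prop where
  holo : DifferentiableOn ℂ f C1
  maps : Set.MapsTo f C1 C1
  symm : ∀ z ∈ C1, f (starRingEnd ℂ z) = starRingEnd ℂ (f z)
  upper : ∀ z ∈ C1, 0 < z.im → 0 ≤ (f z).im
  lower : ∀ z ∈ C1, z.im < 0 → (f z).im ≤ 0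
  val1 : f (c₁ : ℂ) = (c₃ : ℂ)
  val2 : f (c₂ : ℂ) = (c₄ : ℂ)

/-!
Letting two points of the upper half-plane tend to real points, the Schwarz–Pick inequality becomes
`(f x - f y)² ≤ (x - y)² f'(x) f'(y)`. This forces `(f')^(-1/2)` to be concave: for `ℓ` affine,
`1 / ℓ²` has integral `(b - a) / (ℓ a * ℓ b)` over `[a, b]`, so if `(f')^(-1/2)` lay strictly below
its chord `ℓ` on `(a, b)`, integrating `f' > 1 / ℓ²` would contradict the inequality at `a, b`.
To the left of `c₁` the concave function lies below the line `ℓ` through its values `t^(-1/2)` at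
`c₁` and `s^(-1/2)` at `c₂`, so there `f' ≥ 1 / ℓ²`; integrating from `x` to `c₁` gives the bound.
The parameter `Z` encodes the slope of this line: `ℓ y = (2t + Z(c₁ - y)) / (2t√t)`.
-/

section SchwarzPick

open ComplexConjugate

/-- The Cayley transform carrying the upper half-plane to the unit disc and `w` to `0`. -/
def halfPlaneToDisc (w z : ℂ) : ℂ := (z - w) / (z - conj w)

/-- The inverse of the Cayley transform `halfPlaneToDisc w`. -/
def discToHalfPlane (w u : ℂ) : ℂ := (w - conj w * u) / (1 - u)

variable {w z u : ℂ}

lemma sub_conj_ne_zero (hz : 0 < z.im) (hw : 0 < w.im) : z - conj w ≠ 0 := by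
  intro h
  have him : z.im + w.im = 0 := by simpa using congrArg Complex.im h
  linarith

lemma one_sub_norm_halfPlaneToDisc_sq (h : z - conj w ≠ 0) :
    1 - ‖halfPlaneToDisc w z‖ ^ 2 = 4 * (z.im * w.im) / normSq (z - conj w) := by
  have hpos : normSq (z - conj w) ≠ 0 := (normSq_pos.2 h).ne'
  rw [halfPlaneToDisc, norm_div, div_pow, ← normSq_eq_norm_sq, ← normSq_eq_norm_sq,
    eq_div_iff hpos, sub_mul, div_mul_cancel₀ _ hpos]
  simp only [normSq_apply, sub_re, sub_im, conj_re, conj_im]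
  ring

lemma norm_halfPlaneToDisc_lt_one (hz : 0 < z.im) (hw : 0 < w.im) :
    ‖halfPlaneToDisc w z‖ < 1 := by
  have hne := sub_conj_ne_zero hz hw
  have hpos : 0 < 4 * (z.im * w.im) / normSq (z - conj w) :=
    div_pos (by positivity) (normSq_pos.2 hne)
  rw [← one_sub_norm_halfPlaneToDisc_sq hne, sub_pos] at hpos
  exact (sq_lt_one_iff₀ (norm_nonneg _)).1 hpos

lemma one_sub_ne_zero_of_norm_lt_one (hu : ‖u‖ < 1) : 1 - u ≠ 0 := by
  rw [sub_ne_zero]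
  rintro rfl
  simp at hu

lemma im_discToHalfPlane (w u : ℂ) :
    (discToHalfPlane w u).im = w.im * (1 - normSq u) / normSq (1 - u) := by
  rw [discToHalfPlane, div_im, ← sub_div]
  simp only [normSq_apply, sub_re, sub_im, mul_re, mul_im, conj_re, conj_im, one_re, one_im]
  ring

lemma im_discToHalfPlane_pos (hw : 0 < w.im) (hu : ‖u‖ < 1) : 0 < (discToHalfPlane w u).im := by
  have hnorm : normSq u < 1 := by
    rw [normSq_eq_norm_sq]
    exact (sq_lt_one_iff₀ (norm_nonneg _)).2 hu
  rw [im_discToHalfPlane]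
  exact div_pos (mul_pos hw (sub_pos.2 hnorm)) (normSq_pos.2 (one_sub_ne_zero_of_norm_lt_one hu))

lemma discToHalfPlane_halfPlaneToDisc (hz : 0 < z.im) (hw : 0 < w.im) :
    discToHalfPlane w (halfPlaneToDisc w z) = z := by
  have hne := sub_conj_ne_zero hz hw
  have hone := one_sub_ne_zero_of_norm_lt_one (norm_halfPlaneToDisc_lt_one hz hw)
  rw [discToHalfPlane, div_eq_iff hone, halfPlaneToDisc]
  field_simp
  ring

variable {F : ℂ → ℂ}

lemma norm_halfPlaneToDisc_map_le (hF : DifferentiableOn ℂ F {z | 0 < z.im})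
    (hpos : ∀ z : ℂ, 0 < z.im → 0 < (F z).im) (hz : 0 < z.im) (hw : 0 < w.im) :
    ‖halfPlaneToDisc (F w) (F z)‖ ≤ ‖halfPlaneToDisc w z‖ := by
  have him : ∀ u ∈ Metric.ball (0 : ℂ) 1, 0 < (discToHalfPlane w u).im := fun u hu ↦
    im_discToHalfPlane_pos hw (mem_ball_zero_iff.1 hu)
  have hdiff : DifferentiableOn ℂ (discToHalfPlane w) (Metric.ball 0 1) := by
    refine DifferentiableOn.div (by fun_prop) (by fun_prop) fun u hu ↦ ?_
    exact one_sub_ne_zero_of_norm_lt_one (mem_ball_zero_iff.1 hu)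
  have hFdiff : DifferentiableOn ℂ (fun u ↦ F (discToHalfPlane w u)) (Metric.ball 0 1) :=
    hF.comp hdiff him
  have hschwarz := Complex.norm_le_norm_of_mapsTo_ball (R := 1)
    (f := fun u ↦ halfPlaneToDisc (F w) (F (discToHalfPlane w u)))
    ((hFdiff.sub_const _).div (hFdiff.sub_const _) fun u hu ↦
      sub_conj_ne_zero (hpos _ (him u hu)) (hpos w hw))
    (fun u hu ↦ mem_closedBall_zero_iff.2
      (norm_halfPlaneToDisc_lt_one (hpos _ (him u hu)) (hpos w hw)).le)
    (by simp [halfPlaneToDisc, discToHalfPlane])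
    (norm_halfPlaneToDisc_lt_one hz hw)
  simpa only [discToHalfPlane_halfPlaneToDisc hz hw] using hschwarz

lemma normSq_sub_conj_mul_im_le_of_im_pos (hF : DifferentiableOn ℂ F {z | 0 < z.im})
    (hpos : ∀ z : ℂ, 0 < z.im → 0 < (F z).im) (hz : 0 < z.im) (hw : 0 < w.im) :
    normSq (F z - conj (F w)) * (z.im * w.im) ≤
      normSq (z - conj w) * ((F z).im * (F w).im) := by
  have hne := sub_conj_ne_zero hz hw
  have hFne := sub_conj_ne_zero (hpos z hz) (hpos w hw)
  have hsq := pow_le_pow_left₀ (norm_nonneg _) (norm_halfPlaneToDisc_map_le hF hpos hz hw) 2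
  have hdiv : 4 * (z.im * w.im) / normSq (z - conj w) ≤
      4 * ((F z).im * (F w).im) / normSq (F z - conj (F w)) := by
    rw [← one_sub_norm_halfPlaneToDisc_sq hne, ← one_sub_norm_halfPlaneToDisc_sq hFne]
    linarith
  rw [div_le_div_iff₀ (normSq_pos.2 hne) (normSq_pos.2 hFne)] at hdiv
  linarith

-- Apply the strict case to `F + δ · id` and let `δ → 0`.
lemma normSq_sub_conj_mul_im_le (hF : DifferentiableOn ℂ F {z | 0 < z.im})
    (hnonneg : ∀ z : ℂ, 0 < z.im → 0 ≤ (F z).im) (hz : 0 < z.im) (hw : 0 < w.im) :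
    normSq (F z - conj (F w)) * (z.im * w.im) ≤
      normSq (z - conj w) * ((F z).im * (F w).im) := by
  have hperturbed : ∀ δ ∈ Ioi (0 : ℝ),
      normSq ((F z + δ * z) - conj (F w + δ * w)) * (z.im * w.im) ≤
        normSq (z - conj w) * ((F z + δ * z).im * (F w + δ * w).im) := by
    intro δ hδ
    refine normSq_sub_conj_mul_im_le_of_im_pos (F := fun v ↦ F v + δ * v)
      (hF.add (by fun_prop)) (fun v hv ↦ ?_) hz hw
    simpa only [add_im, im_ofReal_mul] using add_pos_of_nonneg_of_pos (hnonneg v hv)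
      (mul_pos hδ hv)
  have := Complex.continuous_conj
  have hlimit := ContinuousWithinAt.closure_le (s := Ioi (0 : ℝ)) (x := 0) (by simp)
    (by fun_prop) (by fun_prop) hperturbed
  simpa using hlimit

end SchwarzPick

section BoundaryValues

open Filter Topology

lemma tendsto_ofReal_add_mul_I (x : ℝ) :
    Tendsto (fun ε : ℝ ↦ (x : ℂ) + ε * I) (𝓝[>] 0) (𝓝 x) := by
  have hcont : Continuous fun ε : ℝ ↦ (x : ℂ) + ε * I := by fun_prop
  simpa using (hcont.tendsto 0).mono_left nhdsWithin_le_nhds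

lemma tendsto_im_ofReal_add_mul_I_div {f : ℂ → ℂ} {f' : ℂ} {x : ℝ} (hf : HasDerivAt f f' x)
    (hreal : (f x).im = 0) :
    Tendsto (fun ε : ℝ ↦ (f (x + ε * I)).im / ε) (𝓝[>] 0) (𝓝 f'.re) := by
  have hpath : HasDerivAt (fun ε : ℝ ↦ (x : ℂ) + ε * I) I 0 := by
    simpa using ((Complex.ofRealCLM.hasDerivAt (x := (0 : ℝ))).mul_const I).const_add (x : ℂ)
  have hcomp : HasDerivAt (fun ε : ℝ ↦ f (x + ε * I)) (f' * I) 0 :=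
    HasDerivAt.comp (h₂ := f) (0 : ℝ) (by simpa using hf) hpath
  have him : HasDerivAt (fun ε : ℝ ↦ (f (x + ε * I)).im) f'.re 0 := by
    have := Complex.imCLM.hasFDerivAt.comp_hasDerivAt (0 : ℝ) hcomp
    rwa [imCLM_apply, mul_I_im] at this
  refine (him.tendsto_slope.mono_left (nhdsGT_le_nhdsNE 0)).congr fun ε ↦ ?_
  simp [slope_def_field, hreal]

end BoundaryValues

/-- The Pick (Herglotz) class of `J ⊆ ℝ`: holomorphic functions on the slit plane `ℂ(J)` that map
the upper half-plane to its closure and `J` to `ℝ`. Symmetry under conjugation is not imposed: for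
nonempty open `J` it follows from the last condition. -/
structure IsPickOn (J : Set ℝ) (f : ℂ → ℂ) : Prop where
  differentiableOn : DifferentiableOn ℂ f (CSlit J)
  im_nonneg : ∀ z : ℂ, 0 < z.im → 0 ≤ (f z).im
  im_ofReal_eq_zero : ∀ x ∈ J, (f (x : ℂ)).im = 0

lemma isOpen_CSlit {J : Set ℝ} (hJ : IsOpen J) : IsOpen (CSlit J) :=
  (isOpen_ne_fun Complex.continuous_im continuous_const).union
    (hJ.preimage Complex.continuous_re)

lemma ofReal_mem_CSlit {J : Set ℝ} {x : ℝ} (hx : x ∈ J) : (x : ℂ) ∈ CSlit J := Or.inr hx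

lemma MemA1.isPickOn {c₁ c₂ c₃ c₄ : ℝ} {f : ℂ → ℂ} (hf : MemA1 c₁ c₂ c₃ c₄ f) :
    IsPickOn (Ioo (-1) 1) f where
  differentiableOn := hf.holo
  im_nonneg z hz := hf.upper z (Or.inl hz.ne') hz
  im_ofReal_eq_zero x hx := by
    have hsymm := hf.symm x (ofReal_mem_CSlit hx)
    rw [conj_ofReal] at hsymm
    exact conj_eq_iff_im.1 hsymm.symm

namespace IsPickOn

open Filter Topology ComplexConjugate

variable {J : Set ℝ} {f : ℂ → ℂ} {x y : ℝ}

lemma hasDerivAt (hf : IsPickOn J f) (hJ : IsOpen J) (hx : x ∈ J) :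
    HasDerivAt f (deriv f x) x :=
  (hf.differentiableOn.differentiableAt
    ((isOpen_CSlit hJ).mem_nhds (ofReal_mem_CSlit hx))).hasDerivAt

lemma hasDerivAt_re (hf : IsPickOn J f) (hJ : IsOpen J) (hx : x ∈ J) :
    HasDerivAt (fun y : ℝ ↦ (f y).re) (deriv f x).re x :=
  (hf.hasDerivAt hJ hx).real_of_complex

lemma continuousOn_re_deriv (hf : IsPickOn J f) (hJ : IsOpen J) :
    ContinuousOn (fun y : ℝ ↦ (deriv f y).re) J :=
  Complex.continuous_re.comp_continuousOn
    ((hf.differentiableOn.deriv (isOpen_CSlit hJ)).continuousOn.comp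
      Complex.continuous_ofReal.continuousOn fun _ ↦ ofReal_mem_CSlit)

lemma normSq_map_sub_conj_le (hf : IsPickOn J f) (x y : ℝ) {ε : ℝ} (hε : 0 < ε) :
    normSq (f (x + ε * I) - conj (f (y + ε * I))) ≤
      normSq ((x + ε * I) - conj (y + ε * I)) *
        ((f (x + ε * I)).im / ε * ((f (y + ε * I)).im / ε)) := by
  have him : ∀ a : ℝ, ((a : ℂ) + ε * I).im = ε := by simp
  have hpick := normSq_sub_conj_mul_im_le (z := x + ε * I) (w := y + ε * I)
    (hf.differentiableOn.mono fun z hz ↦ Or.inl (ne_of_gt hz)) hf.im_nonneg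
    (by rwa [him]) (by rwa [him])
  rwa [him, him, ← le_div_iff₀ (mul_pos hε hε), mul_div_assoc, ← div_mul_div_comm] at hpick

lemma sq_re_sub_re_le (hf : IsPickOn J f) (hJ : IsOpen J) (hx : x ∈ J) (hy : y ∈ J) :
    ((f x).re - (f y).re) ^ 2 ≤ (x - y) ^ 2 * ((deriv f x).re * (deriv f y).re) := by
  have hmap : ∀ a ∈ J, Tendsto (fun ε : ℝ ↦ f (a + ε * I)) (𝓝[>] 0) (𝓝 (f a)) := fun a ha ↦
    (hf.hasDerivAt hJ ha).continuousAt.tendsto.comp (tendsto_ofReal_add_mul_I a)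
  have him : ∀ a ∈ J,
      Tendsto (fun ε : ℝ ↦ (f (a + ε * I)).im / ε) (𝓝[>] 0) (𝓝 (deriv f a).re) := fun a ha ↦
    tendsto_im_ofReal_add_mul_I_div (hf.hasDerivAt hJ ha) (hf.im_ofReal_eq_zero a ha)
  have hnormSq : Continuous fun p : ℂ × ℂ ↦ normSq (p.1 - conj p.2) :=
    continuous_normSq.comp (continuous_fst.sub (Complex.continuous_conj.comp continuous_snd))
  have hlimit := le_of_tendsto_of_tendsto
    ((hnormSq.tendsto (f x, f y)).comp ((hmap x hx).prodMk_nhds (hmap y hy)))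
    (((hnormSq.tendsto ((x : ℂ), (y : ℂ))).comp ((tendsto_ofReal_add_mul_I x).prodMk_nhds
      (tendsto_ofReal_add_mul_I y))).mul ((him x hx).mul (him y hy)))
    (eventually_mem_nhdsWithin.mono fun ε hε ↦ hf.normSq_map_sub_conj_le x y hε)
  simpa [normSq_apply, hf.im_ofReal_eq_zero x hx, hf.im_ofReal_eq_zero y hy, ← sq] using hlimit

end IsPickOn

section ConcavityCriterion

variable {g : ℝ → ℝ} {x y z : ℝ}

lemma exists_last_zero_before (hg : ContinuousOn g (Icc x y)) (hxy : x ≤ y) (hx : 0 ≤ g x)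
    (hy : g y < 0) : ∃ a ∈ Ico x y, g a = 0 ∧ ∀ v ∈ Ioc a y, g v < 0 := by
  have hcompact : IsCompact {v ∈ Icc x y | g v = 0} :=
    isCompact_Icc.of_isClosed_subset (hg.preimage_isClosed_of_isClosed isClosed_Icc
      isClosed_singleton) (sep_subset _ _)
  obtain ⟨v₀, hv₀, hgv₀⟩ := intermediate_value_Icc' hxy hg ⟨hy.le, hx⟩
  obtain ⟨a, ⟨ha, hga⟩, hmax⟩ := hcompact.exists_isGreatest ⟨v₀, hv₀, hgv₀⟩
  have hay : a ≠ y := by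
    rintro rfl
    exact hy.ne hga
  refine ⟨a, ⟨ha.1, ha.2.lt_of_ne hay⟩, hga, fun v hv ↦ ?_⟩
  by_contra! hgv
  obtain ⟨v', hv', hgv'⟩ := intermediate_value_Icc' hv.2
    (hg.mono (Icc_subset_Icc_left (ha.1.trans hv.1.le))) ⟨hy.le, hgv⟩
  exact (hv.1.trans_le hv'.1).not_ge
    (hmax ⟨⟨ha.1.trans (hv.1.le.trans hv'.1), hv'.2⟩, hgv'⟩)

lemma exists_first_zero_after (hg : ContinuousOn g (Icc y z)) (hyz : y ≤ z) (hy : g y < 0)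
    (hz : 0 ≤ g z) : ∃ b ∈ Ioc y z, g b = 0 ∧ ∀ v ∈ Ico y b, g v < 0 := by
  obtain ⟨a, ha, hga, hneg⟩ := exists_last_zero_before (g := fun v ↦ g (-v)) (x := -z) (y := -y)
    (hg.comp continuous_neg.continuousOn fun v hv ↦ ⟨le_neg.2 hv.2, neg_le.2 hv.1⟩)
    (neg_le_neg hyz) (by simpa using hz) (by simpa using hy)
  refine ⟨-a, ⟨lt_neg.2 ha.2, neg_le.2 ha.1⟩, hga, fun v hv ↦ ?_⟩
  simpa using hneg (-v) ⟨lt_neg.2 hv.2, neg_le_neg hv.1⟩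

lemma concaveOn_of_exists_chord_le {s : Set ℝ} (hs : Convex ℝ s) (hg : ContinuousOn g s)
    (hchord : ∀ α β : ℝ, ∀ a ∈ s, ∀ b ∈ s, a < b → g a = α * a + β → g b = α * b + β →
      ∃ v ∈ Ioo a b, α * v + β ≤ g v) : ConcaveOn ℝ s g := by
  refine concaveOn_of_slope_anti_adjacent hs fun {x y z} hx hz hxy hyz ↦ ?_
  by_contra! hslope
  have hxz : 0 < z - x := sub_pos.2 (hxy.trans hyz)
  obtain ⟨α, β, hα⟩ : ∃ α β : ℝ, g x = α * x + β ∧ g z = α * z + β :=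
    ⟨(g z - g x) / (z - x), g x - (g z - g x) / (z - x) * x, by ring, by field_simp; ring⟩
  have hbelow : g y - (α * y + β) < 0 := by
    rw [div_lt_div_iff₀ (sub_pos.2 hxy) (sub_pos.2 hyz), hα.1, hα.2] at hslope
    nlinarith
  have hsub : Icc x z ⊆ s := hs.ordConnected.out hx hz
  have hcont : ContinuousOn (fun v ↦ g v - (α * v + β)) (Icc x z) :=
    (hg.mono hsub).sub (by fun_prop)
  obtain ⟨a, ha, hga, hleft⟩ := exists_last_zero_before
    (hcont.mono (Icc_subset_Icc_right hyz.le)) hxy.le (sub_nonneg.2 hα.1.ge) hbelow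
  obtain ⟨b, hb, hgb, hright⟩ := exists_first_zero_after
    (hcont.mono (Icc_subset_Icc_left hxy.le)) hyz.le hbelow (sub_nonneg.2 hα.2.ge)
  obtain ⟨v, hv, hle⟩ := hchord α β a (hsub ⟨ha.1, (ha.2.trans hyz).le⟩)
    b (hsub ⟨(hxy.trans hb.1).le, hb.2⟩) (ha.2.trans hb.1) (sub_eq_zero.1 hga) (sub_eq_zero.1 hgb)
  rcases le_total v y with hvy | hyv
  · exact (hleft v ⟨hv.1, hvy⟩).not_ge (sub_nonneg.2 hle)
  · exact (hright v ⟨hyv, hv.2⟩).not_ge (sub_nonneg.2 hle)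

end ConcavityCriterion

section LoewnerInequality

variable {α β a b x y : ℝ} {φ φ' : ℝ → ℝ} {J : Set ℝ}

lemma affine_pos_of_mem_Icc (ha : 0 < α * a + β) (hb : 0 < α * b + β) (hy : y ∈ Icc a b) :
    0 < α * y + β := by
  rcases le_total 0 α with hα | hα
  · linarith [mul_le_mul_of_nonneg_left hy.1 hα]
  · linarith [mul_le_mul_of_nonpos_left hy.2 hα]

lemma hasDerivAt_sub_div_affine (ha : α * a + β ≠ 0) (hy : α * y + β ≠ 0) :
    HasDerivAt (fun v ↦ (v - a) / ((α * a + β) * (α * v + β))) ((α * y + β)⁻¹ ^ 2) y := by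
  have hden : HasDerivAt (fun v ↦ (α * a + β) * (α * v + β)) ((α * a + β) * (α * 1)) y :=
    (((hasDerivAt_id y).const_mul α).add_const β).const_mul _
  refine (((hasDerivAt_id y).sub_const a).div hden (mul_ne_zero ha hy)).congr_deriv ?_
  simp only [id]
  field_simp
  ring

lemma exists_sub_inv_affine_sq_eq_slope_sub (hab : a < b) (ha : 0 < α * a + β)
    (hb : 0 < α * b + β) (hφ : ∀ y ∈ Icc a b, HasDerivAt φ (φ' y) y) :
    ∃ y ∈ Ioo a b, φ' y - (α * y + β)⁻¹ ^ 2 =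
      (φ b - φ a) / (b - a) - (α * a + β)⁻¹ * (α * b + β)⁻¹ := by
  have hderiv : ∀ y ∈ Icc a b,
      HasDerivAt (fun v ↦ φ v - (v - a) / ((α * a + β) * (α * v + β)))
        (φ' y - (α * y + β)⁻¹ ^ 2) y := fun y hy ↦
    (hφ y hy).sub (hasDerivAt_sub_div_affine ha.ne' (affine_pos_of_mem_Icc ha hb hy).ne')
  obtain ⟨y, hy, hslope⟩ := exists_hasDerivAt_eq_slope _ _ hab
    (fun y hy ↦ (hderiv y hy).continuousAt.continuousWithinAt)
    fun y hy ↦ hderiv y (Ioo_subset_Icc_self hy)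
  refine ⟨y, hy, hslope.trans ?_⟩
  rw [sub_self, zero_div, sub_zero, sub_right_comm, sub_div,
    div_div_cancel_left' (sub_pos.2 hab).ne', mul_inv]

lemma deriv_pos_of_sq_sub_le {c : ℝ} (hJ : IsOpen J) (hφ : ∀ y ∈ J, HasDerivAt φ (φ' y) y)
    (hL : ∀ x ∈ J, ∀ y ∈ J, (φ x - φ y) ^ 2 ≤ (x - y) ^ 2 * (φ' x * φ' y))
    (hc : c ∈ J) (hφc : 0 < φ' c) (hy : y ∈ J) : 0 < φ' y := by
  rcases eq_or_ne y c with rfl | hyc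
  · exact hφc
  have hnonneg : 0 ≤ φ' y := by
    have hprod : 0 ≤ (y - c) ^ 2 * φ' c * φ' y := by
      linarith [sq_nonneg (φ y - φ c), hL y hy c hc]
    exact nonneg_of_mul_nonneg_right hprod (by have := sub_ne_zero.2 hyc; positivity)
  refine hnonneg.lt_of_ne' fun hzero ↦ hφc.ne' ?_
  have hconst : ∀ v ∈ J, φ v = φ y := fun v hv ↦ by
    have hsq := hL v hv y hy
    rw [hzero, mul_zero, mul_zero] at hsq
    exact sub_eq_zero.1 (pow_eq_zero_iff two_ne_zero |>.1 (hsq.antisymm (sq_nonneg _)))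
  exact (hφ c hc).unique ((hasDerivAt_const c (φ y)).congr_of_eventuallyEq
    (Filter.eventually_of_mem (hJ.mem_nhds hc) hconst))

lemma div_le_sqrt_mul_sqrt {p q d r : ℝ} (hd : 0 < d) (hp : 0 ≤ p)
    (h : r ^ 2 ≤ d ^ 2 * (q * p)) : r / d ≤ √p * √q := by
  rw [← Real.sqrt_mul hp]
  refine Real.le_sqrt_of_sq_le ?_
  rw [div_pow, div_le_iff₀ (pow_pos hd 2)]
  linarith

lemma concaveOn_inv_sqrt_of_sq_sub_le (hJ : Convex ℝ J) (hφ : ∀ y ∈ J, HasDerivAt φ (φ' y) y)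
    (hcont : ContinuousOn φ' J) (hpos : ∀ y ∈ J, 0 < φ' y)
    (hL : ∀ x ∈ J, ∀ y ∈ J, (φ x - φ y) ^ 2 ≤ (x - y) ^ 2 * (φ' x * φ' y)) :
    ConcaveOn ℝ J fun y ↦ (√(φ' y))⁻¹ := by
  have hψpos : ∀ y ∈ J, 0 < (√(φ' y))⁻¹ := fun y hy ↦ inv_pos.2 (Real.sqrt_pos.2 (hpos y hy))
  refine concaveOn_of_exists_chord_le hJ (hcont.sqrt.inv₀ fun y hy ↦
    (Real.sqrt_pos.2 (hpos y hy)).ne') fun α β a ha b hb hab hga hgb ↦ ?_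
  have hℓa : 0 < α * a + β := hga ▸ hψpos a ha
  have hℓb : 0 < α * b + β := hgb ▸ hψpos b hb
  have hsub : Icc a b ⊆ J := hJ.ordConnected.out ha hb
  obtain ⟨y, hy, hmean⟩ :=
    exists_sub_inv_affine_sq_eq_slope_sub hab hℓa hℓb fun y hy ↦ hφ y (hsub hy)
  have hℓy : 0 < α * y + β := affine_pos_of_mem_Icc hℓa hℓb (Ioo_subset_Icc_self hy)
  have hφy : 0 < φ' y := hpos y (hsub (Ioo_subset_Icc_self hy))
  have hslope := div_le_sqrt_mul_sqrt (sub_pos.2 hab) (hpos a ha).le (hL b hb a ha)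
  have hle : φ' y ≤ (α * y + β)⁻¹ ^ 2 := by
    rw [← hga, ← hgb, inv_inv, inv_inv] at hmean
    linarith
  refine ⟨y, hy, ?_⟩
  rw [le_inv_comm₀ hℓy (Real.sqrt_pos.2 hφy)]
  exact (Real.sqrt_le_left (inv_pos.2 hℓy).le).2 hle

lemma le_sub_mul_inv_affine_of_inv_sqrt_le (hab : a < b) (ha : 0 < α * a + β)
    (hb : 0 < α * b + β) (hφ : ∀ y ∈ Icc a b, HasDerivAt φ (φ' y) y)
    (hpos : ∀ y ∈ Ioo a b, 0 < φ' y) (hle : ∀ y ∈ Ioo a b, (√(φ' y))⁻¹ ≤ α * y + β) :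
    φ a ≤ φ b - (b - a) * ((α * a + β)⁻¹ * (α * b + β)⁻¹) := by
  obtain ⟨y, hy, hmean⟩ := exists_sub_inv_affine_sq_eq_slope_sub hab ha hb hφ
  have hderiv : (α * y + β)⁻¹ ^ 2 ≤ φ' y := by
    have hsqrt : (α * y + β)⁻¹ ≤ √(φ' y) :=
      inv_le_of_inv_le₀ (Real.sqrt_pos.2 (hpos y hy)) (hle y hy)
    exact (Real.le_sqrt' (inv_pos.2
      (affine_pos_of_mem_Icc ha hb (Ioo_subset_Icc_self hy)))).1 hsqrt
  have hslope : (α * a + β)⁻¹ * (α * b + β)⁻¹ ≤ (φ b - φ a) / (b - a) := by linarith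
  rw [le_div_iff₀ (sub_pos.2 hab)] at hslope
  linarith

lemma le_affine_of_concaveOn_of_lt {g : ℝ → ℝ} (hg : ConcaveOn ℝ J g) (hx : x ∈ J) (hb : b ∈ J)
    (hxa : x < a) (hab : a < b) (hga : g a = α * a + β) (hgb : g b = α * b + β) :
    g x ≤ α * x + β := by
  have hslope := hg.slope_anti_adjacent hx hb hxa hab
  have hα : (g b - g a) / (b - a) = α := by
    rw [hga, hgb, div_eq_iff (sub_pos.2 hab).ne']
    ring
  rw [hα, le_div_iff₀ (sub_pos.2 hxa), hga] at hslope
  linarith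

end LoewnerInequality

section ExtremalCoeff

/-- The coefficient `Z` of the extremal Möbius function with derivative `4t³ / (2t - Z u)²`: this
derivative equals `t` at `u = 0`, and `Z` is chosen so that it equals `s` at `u = d`. -/
def extremalCoeff (t s d : ℝ) : ℝ := 2 * t * (1 - √(t / s)) / d

variable {t s d : ℝ}

lemma extremalCoeff_pos (ht : 0 < t) (hts : t < s) (hd : 0 < d) : 0 < extremalCoeff t s d := by
  have hsqrt : √(t / s) < 1 := by
    rw [Real.sqrt_lt' one_pos, one_pow]
    exact (div_lt_one (ht.trans hts)).2 hts
  exact div_pos (mul_pos (by positivity) (sub_pos.2 hsqrt)) hd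

lemma two_mul_sub_extremalCoeff_mul (hd : d ≠ 0) :
    2 * t - extremalCoeff t s d * d = 2 * t * √(t / s) := by
  rw [extremalCoeff, div_mul_cancel₀ _ hd]
  ring

lemma extremalCoeff_mul_lt (ht : 0 < t) (hs : 0 < s) (hd : d ≠ 0) :
    extremalCoeff t s d * d < 2 * t := by
  rw [← sub_pos, two_mul_sub_extremalCoeff_mul hd]
  positivity

lemma four_mul_cube_div_sq_eq_iff (ht : 0 < t) (hs : 0 < s) (hd : d ≠ 0) {Z : ℝ}
    (hZ : Z * d < 2 * t) :
    4 * t ^ 3 / (2 * t - Z * d) ^ 2 = s ↔ Z = extremalCoeff t s d := by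
  have hpos : 0 < 2 * t - Z * d := sub_pos.2 hZ
  have hsq : (2 * t * √(t / s)) ^ 2 = 4 * t ^ 3 / s := by
    rw [mul_pow, Real.sq_sqrt (by positivity)]
    ring
  calc 4 * t ^ 3 / (2 * t - Z * d) ^ 2 = s
      ↔ (2 * t - Z * d) ^ 2 = (2 * t * √(t / s)) ^ 2 := by
        rw [hsq, div_eq_iff (by positivity), eq_div_iff hs.ne', mul_comm s, eq_comm]
    _ ↔ 2 * t - Z * d = 2 * t - extremalCoeff t s d * d := by
        rw [two_mul_sub_extremalCoeff_mul hd]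
        exact pow_left_inj₀ hpos.le (by positivity) two_ne_zero
    _ ↔ Z = extremalCoeff t s d := by
        rw [sub_right_inj, mul_left_inj' hd]

lemma two_mul_sub_extremalCoeff_mul_div (ht : 0 < t) (hd : d ≠ 0) :
    (2 * t - extremalCoeff t s d * d) / (2 * t * √t) = (√s)⁻¹ := by
  rw [two_mul_sub_extremalCoeff_mul hd, Real.sqrt_div ht.le]
  field_simp

lemma neg_mul_div_mul_sqrt_eq {Z u : ℝ} (ht : 0 < t) (hZ : Z ≠ 0) (hden : 2 * t + Z * u ≠ 0) :
    -(u * (2 * t * √t / (2 * t + Z * u) * √t)) =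
      4 * t ^ 3 / Z * (1 / (2 * t + Z * u) - 1 / (2 * t)) := by
  calc -(u * (2 * t * √t / (2 * t + Z * u) * √t))
      = -(u * (2 * t * √t ^ 2 / (2 * t + Z * u))) := by ring
    _ = -(u * (2 * t * t / (2 * t + Z * u))) := by rw [Real.sq_sqrt ht.le]
    _ = 4 * t ^ 3 / Z * (-(Z * u) / ((2 * t + Z * u) * (2 * t))) := by field_simp; ring
    _ = 4 * t ^ 3 / Z * (1 / (2 * t + Z * u) - 1 / (2 * t)) := by
        rw [div_sub_div _ _ hden (by positivity)]
        ring

end ExtremalCoeff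

lemma le_moebius_of_sq_sub_le {J : Set ℝ} {φ φ' : ℝ → ℝ} {c₁ c₂ x : ℝ} (hJ : IsOpen J)
    (hconv : Convex ℝ J) (hφ : ∀ y ∈ J, HasDerivAt φ (φ' y) y) (hcont : ContinuousOn φ' J)
    (hL : ∀ x ∈ J, ∀ y ∈ J, (φ x - φ y) ^ 2 ≤ (x - y) ^ 2 * (φ' x * φ' y))
    (hc₁ : c₁ ∈ J) (hc₂ : c₂ ∈ J) (h12 : c₁ < c₂) (hpos₁ : 0 < φ' c₁) (hlt : φ' c₁ < φ' c₂)
    (hx : x ∈ J) (hxc : x < c₁) :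
    φ x ≤ φ c₁ + (4 * φ' c₁ ^ 3 / extremalCoeff (φ' c₁) (φ' c₂) (c₂ - c₁)) *
      (1 / (2 * φ' c₁ + extremalCoeff (φ' c₁) (φ' c₂) (c₂ - c₁) * (c₁ - x)) -
        1 / (2 * φ' c₁)) := by
  have hd : 0 < c₂ - c₁ := sub_pos.2 h12
  have hpos : ∀ y ∈ J, 0 < φ' y := fun y ↦ deriv_pos_of_sq_sub_le hJ hφ hL hc₁ hpos₁
  have hconc := concaveOn_inv_sqrt_of_sq_sub_le hconv hφ hcont hpos hL
  have hZ := extremalCoeff_pos hpos₁ hlt hd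
  have hchord₂ := two_mul_sub_extremalCoeff_mul_div (s := φ' c₂) hpos₁ hd.ne'
  set t := φ' c₁
  set Z := extremalCoeff t (φ' c₂) (c₂ - c₁)
  obtain ⟨α, β, hℓ⟩ : ∃ α β : ℝ, ∀ y, α * y + β = (2 * t + Z * (c₁ - y)) / (2 * t * √t) :=
    ⟨-Z / (2 * t * √t), (2 * t + Z * c₁) / (2 * t * √t), fun y ↦ by ring⟩
  have hℓ₁ : (√t)⁻¹ = α * c₁ + β := by rw [hℓ]; field_simp; ring
  have hℓ₂ : (√(φ' c₂))⁻¹ = α * c₂ + β := by rw [hℓ, ← hchord₂]; ring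
  have hnum : 0 < 2 * t + Z * (c₁ - x) := by
    have := sub_pos.2 hxc
    positivity
  have hsub : Icc x c₁ ⊆ J := hconv.ordConnected.out hx hc₁
  have hbound := le_sub_mul_inv_affine_of_inv_sqrt_le hxc
    (by rw [hℓ]; positivity) (by rw [← hℓ₁]; positivity) (fun y hy ↦ hφ y (hsub hy))
    (fun y hy ↦ hpos y (hsub (Ioo_subset_Icc_self hy)))
    fun y hy ↦ le_affine_of_concaveOn_of_lt hconc (hsub (Ioo_subset_Icc_self hy)) hc₂ hy.2 h12
      hℓ₁ hℓ₂
  rwa [← hℓ₁, hℓ, inv_inv, inv_div, sub_eq_add_neg,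
    neg_mul_div_mul_sqrt_eq hpos₁ hZ.ne' hnum.ne'] at hbound

theorem stmt12_general {J : Set ℝ} {f : ℂ → ℂ} {c₁ c₂ t s Z : ℝ} (hJ : IsOpen J)
    (hconv : Convex ℝ J) (hf : IsPickOn J f) (hc₁ : c₁ ∈ J) (hc₂ : c₂ ∈ J) (h12 : c₁ < c₂)
    (ht : t = deriv (fun y : ℝ => (f y).re) c₁) (hs : s = deriv (fun y : ℝ => (f y).re) c₂)
    (htpos : 0 < t) (hts : t < s) (hZ : Z = 2 * t * (1 - √(t / s)) / (c₂ - c₁)) :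
    0 < Z ∧
    Z * (c₂ - c₁) < 2 * t ∧
    4 * t ^ 3 / (2 * t - Z * (c₂ - c₁)) ^ 2 = s ∧
    (∀ Z' : ℝ, Z' * (c₂ - c₁) < 2 * t →
      4 * t ^ 3 / (2 * t - Z' * (c₂ - c₁)) ^ 2 = s → Z' = Z) ∧
    ∀ x ∈ J, x < c₁ →
      (f x).re ≤ (f c₁).re +
        (4 * t ^ 3 / Z) * (1 / (2 * t + Z * (c₁ - x)) - 1 / (2 * t)) := by
  have hd : 0 < c₂ - c₁ := sub_pos.2 h12
  have hs0 : 0 < s := htpos.trans hts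
  rw [(hf.hasDerivAt_re hJ hc₁).deriv] at ht
  rw [(hf.hasDerivAt_re hJ hc₂).deriv] at hs
  change Z = extremalCoeff t s (c₂ - c₁) at hZ
  subst hZ
  have hlt := extremalCoeff_mul_lt htpos hs0 hd.ne'
  refine ⟨extremalCoeff_pos htpos hts hd, hlt,
    (four_mul_cube_div_sq_eq_iff htpos hs0 hd.ne' hlt).2 rfl,
    fun Z' hZ' ↦ (four_mul_cube_div_sq_eq_iff htpos hs0 hd.ne' hZ').1, fun x hx hxc ↦ ?_⟩
  subst ht hs
  exact le_moebius_of_sq_sub_le hJ hconv (fun y ↦ hf.hasDerivAt_re hJ)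
    (hf.continuousOn_re_deriv hJ) (fun x hx y ↦ hf.sq_re_sub_re_le hJ hx)
    hc₁ hc₂ h12 htpos hts hx hxc

theorem stmt12 (c₁ c₂ c₃ c₄ : ℝ)
    (h1 : -1 < c₁) (h12 : c₁ < c₂) (h2 : c₂ < 1)
    (h3 : -1 < c₃) (h34 : c₃ < c₄) (h4 : c₄ < 1)
    (f : ℂ → ℂ) (hf : MemA1 c₁ c₂ c₃ c₄ f)
    (t s Z : ℝ)
    (ht : t = deriv (fun y : ℝ => (f y).re) c₁)
    (hs : s = deriv (fun y : ℝ => (f y).re) c₂)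
    (htpos : 0 < t) (hts : t < s)
    (hZ : Z = 2 * t * (1 - Real.sqrt (t / s)) / (c₂ - c₁)) :
    0 < Z ∧
    Z * (c₂ - c₁) < 2 * t ∧
    4 * t ^ 3 / (2 * t - Z * (c₂ - c₁)) ^ 2 = s ∧
    (∀ Z' : ℝ, Z' * (c₂ - c₁) < 2 * t →
      4 * t ^ 3 / (2 * t - Z' * (c₂ - c₁)) ^ 2 = s → Z' = Z) ∧
    ∀ x ∈ Set.Ioo (-1 : ℝ) c₁,
      (f x).re ≤ c₃ + (4 * t ^ 3 / Z) * (1 / (2 * t + Z * (c₁ - x)) - 1 / (2 * t)) := by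
  obtain ⟨hZpos, hZlt, hZeq, hZunique, hbound⟩ := stmt12_general isOpen_Ioo (convex_Ioo (-1) 1)
    hf.isPickOn ⟨h1, h12.trans h2⟩ ⟨h1.trans h12, h2⟩ h12 ht hs htpos hts hZ
  rw [hf.val1, ofReal_re] at hbound
  exact ⟨hZpos, hZlt, hZeq, hZunique, fun x hx ↦
    hbound x ⟨hx.1, hx.2.trans (h12.trans h2)⟩ hx.2⟩
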